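/- All entries of B̃ are nonnegative and, for every j ∈ {0,…,m₂}, the row sum satisfies Σ_{ℓ=0}^{m₂} B̃_{j,ℓ} = Σ_{ℓ=0}^{m₂−1} ∫_{y_ℓ}^{y_{ℓ+1}} f(ξ − y_j) dξ ≤ 1. Consequently ‖B̃‖_∞ ≤ 1 and, for any m₁ ≥ 0 and λ > 0, the jump matrix B = I_{m₁+1} ⊗ (λB̃) satisfies ‖B‖_∞ ≤ λ, where ‖·‖_∞ denotes the maximum-row-sum matrix norm. -/

import Mathlib

open MeasureTheory

/-- F_{0,j,ℓ} = ∫_{y_ℓ}^{y_{ℓ+1}} f(ξ − y_j) dξ. -/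
noncomputable def F0 (y : ℕ → ℝ) (f : ℝ → ℝ) (j ℓ : ℕ) : ℝ :=
  ∫ ξ in (y ℓ)..(y (ℓ+1)), f (ξ - y j)

/-- F_{1,j,ℓ} = ∫_{y_ℓ}^{y_{ℓ+1}} ξ f(ξ − y_j) dξ. -/
noncomputable def F1 (y : ℕ → ℝ) (f : ℝ → ℝ) (j ℓ : ℕ) : ℝ :=
  ∫ ξ in (y ℓ)..(y (ℓ+1)), ξ * f (ξ - y j)

/-- The (m₂+1)×(m₂+1) jump quadrature matrix B̃. -/
noncomputable def Btilde (m₂ : ℕ) (y : ℕ → ℝ) (Δy : ℝ) (f : ℝ → ℝ) :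
    Matrix (Fin (m₂+1)) (Fin (m₂+1)) ℝ :=
  Matrix.of fun j ℓ =>
    if ℓ.val = 0 then
      (y 1 * F0 y f j.val 0 - F1 y f j.val 0) / Δy
    else if ℓ.val = m₂ then
      (F1 y f j.val (m₂-1) - y (m₂-1) * F0 y f j.val (m₂-1)) / Δy
    else
      (F1 y f j.val (ℓ.val-1) - y (ℓ.val-1) * F0 y f j.val (ℓ.val-1)) / Δy
        + (y (ℓ.val+1) * F0 y f j.val ℓ.val - F1 y f j.val ℓ.val) / Δy

/-!
On each cell `[y_ℓ, y_{ℓ+1}]` the mass `F₀` of the shifted density is split between the two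
endpoints by the linear hat functions, with weights that are nonnegative and add up to `F₀`. Every
entry of `B̃` collects the weights that the cells send to one node, so a row sum is the total mass
of the cells, which is at most `∫ f`. The factor `I ⊗ ·` of the jump matrix only pads rows with
zeros.
-/

section Moments

variable {μ : Measure ℝ} {g : ℝ → ℝ} {a b : ℝ}

theorem left_mul_integral_le_integral_id_mul (hab : a ≤ b) (hg : IntervalIntegrable g μ a b)
    (hg0 : 0 ≤ᵐ[μ.restrict (Set.Icc a b)] g) :
    a * ∫ x in a..b, g x ∂μ ≤ ∫ x in a..b, x * g x ∂μ := by
  rw [← intervalIntegral.integral_const_mul]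
  refine intervalIntegral.integral_mono_ae_restrict hab (hg.const_mul a)
    (hg.continuousOn_mul continuousOn_id) ?_
  filter_upwards [hg0, ae_restrict_mem measurableSet_Icc] with x hgx hx
  exact mul_le_mul_of_nonneg_right hx.1 hgx

theorem integral_id_mul_le_right_mul_integral (hab : a ≤ b) (hg : IntervalIntegrable g μ a b)
    (hg0 : 0 ≤ᵐ[μ.restrict (Set.Icc a b)] g) :
    ∫ x in a..b, x * g x ∂μ ≤ b * ∫ x in a..b, g x ∂μ := by
  rw [← intervalIntegral.integral_const_mul]
  refine intervalIntegral.integral_mono_ae_restrict hab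
    (hg.continuousOn_mul continuousOn_id) (hg.const_mul b) ?_
  filter_upwards [hg0, ae_restrict_mem measurableSet_Icc] with x hgx hx
  exact mul_le_mul_of_nonneg_right hx.2 hgx

end Moments

theorem ae_nonneg_comp_sub_right {f : ℝ → ℝ} (hf0 : 0 ≤ᵐ[volume] f) (c : ℝ) :
    0 ≤ᵐ[volume] fun ξ => f (ξ - c) :=
  (measurePreserving_sub_right volume c).quasiMeasurePreserving.ae hf0

/-- The part of the mass `F0 y f j ℓ` of cell `ℓ` that linear interpolation assigns to the left
node `y ℓ`, i.e. the integral of `f (ξ - y j)` against `(y (ℓ + 1) - ξ) / Δy`. -/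
noncomputable def leftNodeWeight (y : ℕ → ℝ) (Δy : ℝ) (f : ℝ → ℝ) (j ℓ : ℕ) : ℝ :=
  (y (ℓ + 1) * F0 y f j ℓ - F1 y f j ℓ) / Δy

/-- The part of the mass `F0 y f j ℓ` of cell `ℓ` that linear interpolation assigns to the right
node `y (ℓ + 1)`, i.e. the integral of `f (ξ - y j)` against `(ξ - y ℓ) / Δy`. -/
noncomputable def rightNodeWeight (y : ℕ → ℝ) (Δy : ℝ) (f : ℝ → ℝ) (j ℓ : ℕ) : ℝ :=
  (F1 y f j ℓ - y ℓ * F0 y f j ℓ) / Δy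

section Quadrature

variable {y : ℕ → ℝ} {Δy : ℝ} {f : ℝ → ℝ} {m₂ : ℕ}

theorem leftNodeWeight_nonneg (hf0 : 0 ≤ᵐ[volume] f) (hfi : Integrable f) (hΔy : 0 ≤ Δy)
    {ℓ : ℕ} (hcell : y ℓ ≤ y (ℓ + 1)) (j : ℕ) : 0 ≤ leftNodeWeight y Δy f j ℓ :=
  div_nonneg (sub_nonneg.2 <| integral_id_mul_le_right_mul_integral hcell
    (hfi.comp_sub_right _).intervalIntegrable
    (ae_restrict_of_ae (ae_nonneg_comp_sub_right hf0 _))) hΔy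

theorem rightNodeWeight_nonneg (hf0 : 0 ≤ᵐ[volume] f) (hfi : Integrable f) (hΔy : 0 ≤ Δy)
    {ℓ : ℕ} (hcell : y ℓ ≤ y (ℓ + 1)) (j : ℕ) : 0 ≤ rightNodeWeight y Δy f j ℓ :=
  div_nonneg (sub_nonneg.2 <| left_mul_integral_le_integral_id_mul hcell
    (hfi.comp_sub_right _).intervalIntegrable
    (ae_restrict_of_ae (ae_nonneg_comp_sub_right hf0 _))) hΔy

theorem leftNodeWeight_add_rightNodeWeight (hΔy : Δy ≠ 0) {ℓ : ℕ}
    (hstep : y (ℓ + 1) - y ℓ = Δy) (j : ℕ) :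
    leftNodeWeight y Δy f j ℓ + rightNodeWeight y Δy f j ℓ = F0 y f j ℓ := by
  calc leftNodeWeight y Δy f j ℓ + rightNodeWeight y Δy f j ℓ
      = (y (ℓ + 1) - y ℓ) * F0 y f j ℓ / Δy := by
        rw [leftNodeWeight, rightNodeWeight]; ring
    _ = F0 y f j ℓ := by rw [hstep, mul_div_cancel_left₀ _ hΔy]

theorem Btilde_apply_eq_sum_cells (hm₂ : m₂ ≠ 0) (j ℓ : Fin (m₂ + 1)) :
    Btilde m₂ y Δy f j ℓ = ∑ k ∈ Finset.range m₂,
      ((if (ℓ : ℕ) = k then leftNodeWeight y Δy f j k else 0) +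
        if (ℓ : ℕ) = k + 1 then rightNodeWeight y Δy f j k else 0) := by
  rw [Finset.sum_add_distrib, Finset.sum_ite_eq]
  obtain ⟨_ | p, hp⟩ := ℓ
  · simp [Btilde, leftNodeWeight, Nat.pos_of_ne_zero hm₂]
  · have hpm : p < m₂ := Nat.lt_of_succ_lt_succ hp
    simp only [Nat.add_right_cancel_iff, Finset.sum_ite_eq, Finset.mem_range, if_pos hpm]
    by_cases hlast : p + 1 = m₂
    · simp [Btilde, rightNodeWeight, ← hlast]
    · have hlt : p + 1 < m₂ := lt_of_le_of_ne hpm hlast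
      simp [Btilde, leftNodeWeight, rightNodeWeight, hlast, hlt, add_comm]

theorem Btilde_nonneg (hf0 : 0 ≤ᵐ[volume] f) (hfi : Integrable f) (hΔy : 0 ≤ Δy)
    (hy : Monotone y) (hm₂ : m₂ ≠ 0) (j ℓ : Fin (m₂ + 1)) : 0 ≤ Btilde m₂ y Δy f j ℓ := by
  rw [Btilde_apply_eq_sum_cells hm₂]
  refine Finset.sum_nonneg fun k _ => add_nonneg ?_ ?_ <;> split_ifs
  exacts [leftNodeWeight_nonneg hf0 hfi hΔy (hy k.le_succ) j, le_rfl,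
    rightNodeWeight_nonneg hf0 hfi hΔy (hy k.le_succ) j, le_rfl]

theorem sum_Btilde_row (hm₂ : m₂ ≠ 0) (hΔy : Δy ≠ 0)
    (hstep : ∀ k < m₂, y (k + 1) - y k = Δy) (j : Fin (m₂ + 1)) :
    ∑ ℓ, Btilde m₂ y Δy f j ℓ = ∑ k ∈ Finset.range m₂, F0 y f j k := by
  simp_rw [Btilde_apply_eq_sum_cells hm₂]
  rw [Finset.sum_comm]
  refine Finset.sum_congr rfl fun k hk => ?_
  have hkm : k < m₂ := Finset.mem_range.1 hk
  rw [Fin.sum_univ_eq_sum_range fun ℓ =>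
      (if ℓ = k then leftNodeWeight y Δy f j k else 0) +
        if ℓ = k + 1 then rightNodeWeight y Δy f j k else 0,
    Finset.sum_add_distrib, Finset.sum_ite_eq', Finset.sum_ite_eq',
    if_pos (Finset.mem_range.2 (by omega)), if_pos (Finset.mem_range.2 (by omega)),
    leftNodeWeight_add_rightNodeWeight hΔy (hstep k hkm)]

theorem sum_F0_le_integral (hf0 : 0 ≤ᵐ[volume] f) (hfi : Integrable f) (hy : Monotone y)
    (j m : ℕ) : ∑ k ∈ Finset.range m, F0 y f j k ≤ ∫ ξ, f ξ := by
  have hshift : Integrable fun ξ => f (ξ - y j) := hfi.comp_sub_right (y j)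
  calc ∑ k ∈ Finset.range m, F0 y f j k
      = ∫ ξ in y 0..y m, f (ξ - y j) :=
        intervalIntegral.sum_integral_adjacent_intervals fun _ _ => hshift.intervalIntegrable
    _ = ∫ ξ in Set.Ioc (y 0) (y m), f (ξ - y j) :=
        intervalIntegral.integral_of_le (hy m.zero_le)
    _ ≤ ∫ ξ, f (ξ - y j) := setIntegral_le_integral hshift (ae_nonneg_comp_sub_right hf0 _)
    _ = ∫ ξ, f ξ := integral_sub_right_eq_self f (y j)

end Quadrature

open scoped Kronecker in
theorem sum_abs_one_kronecker_row {l m n R : Type*} [Fintype l] [DecidableEq l] [Fintype n]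
    [Ring R] [LinearOrder R] [IsStrictOrderedRing R] (A : Matrix m n R) (i : l) (j : m) :
    ∑ q, |((1 : Matrix l l R) ⊗ₖ A) (i, j) q| = ∑ k, |A j k| := by
  rw [Fintype.sum_prod_type, Fintype.sum_eq_single i]
  · simp only [Matrix.kroneckerMap_apply, Matrix.one_apply_eq, one_mul]
  · intro i' hi'
    simp [Matrix.one_apply_ne hi'.symm]

theorem jump_matrix_row_sums_general
    (f : ℝ → ℝ) (hf0 : 0 ≤ᵐ[volume] f) (hfi : Integrable f)
    (m₂ : ℕ) (hm₂ : 1 ≤ m₂) (y₀ Δy : ℝ) (hΔy : 0 < Δy) :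
    let y : ℕ → ℝ := fun k => y₀ + k * Δy
    let B := Btilde m₂ y Δy f
    (∀ j ℓ : Fin (m₂+1), 0 ≤ B j ℓ) ∧
    (∀ j : Fin (m₂+1),
      ∑ ℓ : Fin (m₂+1), B j ℓ
        = ∑ ℓ ∈ Finset.range m₂, ∫ ξ in (y ℓ)..(y (ℓ+1)), f (ξ - y j.val)) ∧
    (∀ j : Fin (m₂+1), ∑ ℓ : Fin (m₂+1), B j ℓ ≤ ∫ ξ, f ξ) ∧
    (⨆ j : Fin (m₂+1), ∑ ℓ : Fin (m₂+1), |B j ℓ|) ≤ ∫ ξ, f ξ ∧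
    (∀ (m₁ : ℕ) (lam : ℝ),
      (⨆ p : Fin (m₁+1) × Fin (m₂+1),
        ∑ q : Fin (m₁+1) × Fin (m₂+1),
          |(Matrix.kroneckerMap (· * ·)
              (1 : Matrix (Fin (m₁+1)) (Fin (m₁+1)) ℝ) (lam • B)) p q|) ≤ |lam| * ∫ ξ, f ξ) := by
  intro y B
  have hm₂' : m₂ ≠ 0 := Nat.one_le_iff_ne_zero.1 hm₂
  have hstep (k : ℕ) : y (k + 1) - y k = Δy := by simp only [y]; push_cast; ring
  have hy : Monotone y := monotone_nat_of_le_succ fun k => by linarith [hstep k]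
  have hnonneg : ∀ j ℓ, 0 ≤ B j ℓ := Btilde_nonneg hf0 hfi hΔy.le hy hm₂'
  have hsum (j : Fin (m₂ + 1)) : ∑ ℓ, B j ℓ = ∑ k ∈ Finset.range m₂, F0 y f j k :=
    sum_Btilde_row hm₂' hΔy.ne' (fun k _ => hstep k) j
  have hle (j : Fin (m₂ + 1)) : ∑ ℓ, B j ℓ ≤ ∫ ξ, f ξ :=
    (hsum j).trans_le (sum_F0_le_integral hf0 hfi hy j m₂)
  have habs (j : Fin (m₂ + 1)) : ∑ ℓ, |B j ℓ| ≤ ∫ ξ, f ξ := by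
    simpa only [abs_of_nonneg (hnonneg _ _)] using hle j
  refine ⟨hnonneg, hsum, hle, ciSup_le habs, fun m₁ lam => ciSup_le fun ⟨i, j⟩ => ?_⟩
  calc _ = ∑ ℓ, |(lam • B) j ℓ| := sum_abs_one_kronecker_row (lam • B) i j
    _ = |lam| * ∑ ℓ, |B j ℓ| := by
      simp only [Matrix.smul_apply, smul_eq_mul, abs_mul, Finset.mul_sum]
    _ ≤ |lam| * ∫ ξ, f ξ := mul_le_mul_of_nonneg_left (habs j) (abs_nonneg lam)

/-- All entries of B̃ are nonnegative and every row sum equals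
Σ_{ℓ=0}^{m₂−1} ∫_{y_ℓ}^{y_{ℓ+1}} f(ξ − y_j) dξ ≤ 1.  Consequently ‖B̃‖_∞ ≤ 1
(maximum-row-sum norm) and, for any m₁ ≥ 0 and λ > 0, the jump matrix
B = I_{m₁+1} ⊗ (λB̃) satisfies ‖B‖_∞ ≤ λ. -/
theorem jump_matrix_row_sums
    (f : ℝ → ℝ) (hf0 : ∀ ξ : ℝ, 0 ≤ f ξ) (hfi : Integrable f)
    (hfb : BddAbove (Set.range f)) (hf1 : (∫ ξ : ℝ, f ξ) = 1)
    (m₂ : ℕ) (hm₂ : 1 ≤ m₂) (y₀ Δy : ℝ) (hΔy : 0 < Δy) :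
    let y : ℕ → ℝ := fun k => y₀ + k * Δy
    let B := Btilde m₂ y Δy f
    (∀ j ℓ : Fin (m₂+1), 0 ≤ B j ℓ) ∧
    (∀ j : Fin (m₂+1),
      ∑ ℓ : Fin (m₂+1), B j ℓ
        = ∑ ℓ ∈ Finset.range m₂, ∫ ξ in (y ℓ)..(y (ℓ+1)), f (ξ - y j.val)) ∧
    (∀ j : Fin (m₂+1), ∑ ℓ : Fin (m₂+1), B j ℓ ≤ 1) ∧
    (⨆ j : Fin (m₂+1), ∑ ℓ : Fin (m₂+1), |B j ℓ|) ≤ 1 ∧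
    (∀ (m₁ : ℕ) (lam : ℝ), 0 < lam →
      (⨆ p : Fin (m₁+1) × Fin (m₂+1),
        ∑ q : Fin (m₁+1) × Fin (m₂+1),
          |(Matrix.kroneckerMap (· * ·)
              (1 : Matrix (Fin (m₁+1)) (Fin (m₁+1)) ℝ) (lam • B)) p q|) ≤ lam) := by
  obtain ⟨hnonneg, hsum, hle, hnorm, hkron⟩ :=
    hf1 ▸ jump_matrix_row_sums_general f (ae_of_all _ hf0) hfi m₂ hm₂ y₀ Δy hΔy
  exact ⟨hnonneg, hsum, hle, hnorm, fun m₁ lam hlam => by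
    simpa only [mul_one, abs_of_pos hlam] using hkron m₁ lam⟩
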